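/- Let α ≥ 0. Define for s > 1 the symmetric outer bound C̄(s, s^α) = sup_{ρ∈[0,1]} (1/2)·[ log₂(1 + (1−ρ²)·s/(1 + (1−ρ²)·s^α)) + log₂(1 + s + s^α + 2ρ·s^{(1+α)/2}) ]. Then C̄(s, s^α)/log₂(s) tends to max(α/2, 1 − α/2) as s → ∞. -/

import Mathlib

open Real Filter Set

open scoped Topology Asymptotics

/-!
Without input correlation (`ρ = 0`) the bound equals `log₂ (1 + S + I) - log₂ (1 + I) / 2`.
Correlation only shrinks the first logarithm, since `t ↦ t S / (1 + t I)` is increasing, and raises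
the second one by at most one bit, since `2ρ√(S I) ≤ S + I`. Hence the supremum is within half a
bit of its value at `ρ = 0`. For `I = S ^ α` this gap disappears after dividing by `log₂ S`, and the
two remaining logarithms grow like `max 1 α` and `max 0 α` times `log₂ S`.
-/

lemma tendsto_div_of_sub_mem_Icc {ι : Type*} {l : Filter ι} {f g h : ι → ℝ} {a b c : ℝ}
    (hh : Tendsto h l atTop) (hg : Tendsto (fun x => g x / h x) l (𝓝 c))
    (hfg : ∀ᶠ x in l, f x - g x ∈ Icc a b) :
    Tendsto (fun x => f x / h x) l (𝓝 c) := by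
  have gap : Tendsto (fun x => (f x - g x) / h x) l (𝓝 0) :=
    tendsto_bdd_div_atTop_nhds_zero (hfg.mono fun _ hx => hx.1) (hfg.mono fun _ hx => hx.2) hh
  simpa only [← add_div, add_sub_cancel, add_zero] using hg.add gap

lemma sqrt_mul_rpow_self {s : ℝ} (hs : 0 < s) (α : ℝ) : √(s * s ^ α) = s ^ ((1 + α) / 2) := by
  rw [mul_comm, ← rpow_add_one hs.ne', sqrt_eq_rpow, ← rpow_mul hs.le, mul_one_div, add_comm]

section PowerGrowth

variable {f g : ℝ → ℝ} {a b : ℝ}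

lemma rpow_isBigO_rpow_atTop (hab : a ≤ b) :
    (fun s : ℝ => s ^ a) =O[atTop] fun s : ℝ => s ^ b := by
  refine Asymptotics.IsBigO.of_norm_eventuallyLE ?_
  filter_upwards [eventually_ge_atTop 1] with s hs
  rw [norm_of_nonneg (rpow_nonneg (zero_le_one.trans hs) a)]
  exact rpow_le_rpow_of_exponent_le hs hab

lemma isTheta_rpow_max_add (hf : f =Θ[atTop] fun s => s ^ a) (hg : g =Θ[atTop] fun s => s ^ b)
    (hf_nonneg : ∀ᶠ s in atTop, 0 ≤ f s) (hg_nonneg : ∀ᶠ s in atTop, 0 ≤ g s) :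
    (fun s => f s + g s) =Θ[atTop] fun s => s ^ max a b := by
  constructor
  · exact (hf.isBigO.trans (rpow_isBigO_rpow_atTop (le_max_left a b))).add
      (hg.isBigO.trans (rpow_isBigO_rpow_atTop (le_max_right a b)))
  · have f_le : f =O[atTop] fun s => f s + g s := by
      refine Asymptotics.IsBigO.of_norm_eventuallyLE ?_
      filter_upwards [hf_nonneg, hg_nonneg] with s hfs hgs
      rw [norm_of_nonneg hfs]
      exact le_add_of_nonneg_right hgs
    have g_le : g =O[atTop] fun s => f s + g s := by
      refine Asymptotics.IsBigO.of_norm_eventuallyLE ?_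
      filter_upwards [hf_nonneg, hg_nonneg] with s hfs hgs
      rw [norm_of_nonneg hgs]
      exact le_add_of_nonneg_left hfs
    rcases max_choice a b with hmax | hmax <;> rw [hmax]
    · exact hf.isBigO_symm.trans f_le
    · exact hg.isBigO_symm.trans g_le

lemma tendsto_logb_div_logb_of_isTheta_rpow (hb : 1 < b) (hf : f =Θ[atTop] fun s => s ^ a) :
    Tendsto (fun s => logb b (f s) / logb b s) atTop (𝓝 a) := by
  obtain ⟨C, C_pos, hC⟩ := hf.isBigO.exists_pos
  obtain ⟨D, D_pos, hD⟩ := hf.isBigO_symm.exists_pos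
  have main_term : Tendsto (fun s => a * logb b s / logb b s) atTop (𝓝 a) := by
    refine tendsto_const_nhds.congr' ?_
    filter_upwards [eventually_gt_atTop 1] with s hs
    rw [mul_div_cancel_right₀ _ (logb_pos hb hs).ne']
  refine tendsto_div_of_sub_mem_Icc (a := -logb b D) (b := logb b C)
    (tendsto_logb_atTop hb) main_term ?_
  filter_upwards [hC.bound, hD.bound, eventually_gt_atTop 0] with s upper lower hs
  have pow_pos : 0 < s ^ a := rpow_pos_of_pos hs a
  rw [norm_of_nonneg pow_pos.le, Real.norm_eq_abs] at upper lower
  have f_pos : 0 < |f s| := pos_of_mul_pos_right (pow_pos.trans_le lower) D_pos.le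
  have log_upper := logb_le_logb_of_le hb f_pos upper
  have log_lower := logb_le_logb_of_le hb pow_pos lower
  rw [logb_mul C_pos.ne' pow_pos.ne', logb_abs, logb_rpow_eq_mul_logb_of_pos hs] at log_upper
  rw [logb_mul D_pos.ne' f_pos.ne', logb_abs, logb_rpow_eq_mul_logb_of_pos hs] at log_lower
  constructor <;> linarith

lemma one_add_rpow_isTheta (α : ℝ) :
    (fun s : ℝ => 1 + s ^ α) =Θ[atTop] fun s => s ^ max 0 α := by
  refine isTheta_rpow_max_add ?_ (Asymptotics.isTheta_refl _ _) ?_ ?_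
  · simpa only [rpow_zero] using Asymptotics.isTheta_refl _ _
  · exact .of_forall fun _ => zero_le_one
  · filter_upwards [eventually_ge_atTop 0] with s hs using rpow_nonneg hs α

lemma one_add_self_add_rpow_isTheta (α : ℝ) :
    (fun s : ℝ => 1 + s + s ^ α) =Θ[atTop] fun s => s ^ max 1 α := by
  refine isTheta_rpow_max_add ?_ (Asymptotics.isTheta_refl _ _) ?_ ?_
  · simpa only [rpow_one, max_eq_right zero_le_one] using one_add_rpow_isTheta 1
  · filter_upwards [eventually_ge_atTop 0] with s hs using add_nonneg zero_le_one hs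
  · filter_upwards [eventually_ge_atTop 0] with s hs using rpow_nonneg hs α

end PowerGrowth

/-- The bound on the symmetric rate of the feedback interference channel with signal-to-noise ratio
`S` and interference-to-noise ratio `I` when the inputs have correlation coefficient `ρ`. -/
noncomputable def rateBound (S I ρ : ℝ) : ℝ :=
  (1 / 2) * (logb 2 (1 + (1 - ρ ^ 2) * S / (1 + (1 - ρ ^ 2) * I)) +
    logb 2 (1 + S + I + 2 * ρ * √(S * I)))

/-- The symmetric outer bound `C̄(S, I)`: the supremum of `rateBound S I ρ` over the correlation
coefficients `ρ ∈ [0, 1]`. -/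
noncomputable def symmetricOuterBound (S I : ℝ) : ℝ :=
  sSup (rateBound S I '' Icc 0 1)

section FiniteSNR

variable {S I ρ t u : ℝ}

lemma rateBound_zero (hS : 0 ≤ S) (hI : 0 ≤ I) :
    rateBound S I 0 = logb 2 (1 + S + I) - logb 2 (1 + I) / 2 := by
  have first_term : 1 + S / (1 + I) = (1 + S + I) / (1 + I) := by
    field_simp
    ring
  simp only [rateBound, ne_eq, OfNat.ofNat_ne_zero, not_false_eq_true, zero_pow, sub_zero, one_mul,
    mul_zero, zero_mul, add_zero]
  rw [first_term, logb_div (by positivity) (by positivity)]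
  ring

lemma mul_div_one_add_mul_le_of_le (hS : 0 ≤ S) (hI : 0 ≤ I) (ht : 0 ≤ t) (htu : t ≤ u) :
    t * S / (1 + t * I) ≤ u * S / (1 + u * I) := by
  have hu : 0 ≤ u := ht.trans htu
  rw [div_le_div_iff₀ (by positivity) (by positivity)]
  linarith [mul_le_mul_of_nonneg_right htu hS]

lemma two_mul_mul_sqrt_mul_le_add (hS : 0 ≤ S) (hI : 0 ≤ I) (hρ : ρ ≤ 1) :
    2 * ρ * √(S * I) ≤ S + I := by
  calc 2 * ρ * √(S * I) ≤ 2 * √S * √I := by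
        rw [sqrt_mul hS, mul_assoc 2 √S]
        gcongr
        exact mul_le_of_le_one_right zero_le_two hρ
    _ ≤ √S ^ 2 + √I ^ 2 := two_mul_le_add_sq _ _
    _ = S + I := by rw [sq_sqrt hS, sq_sqrt hI]

lemma rateBound_le_rateBound_zero_add (hS : 0 ≤ S) (hI : 0 ≤ I) (hρ : ρ ∈ Icc (0 : ℝ) 1) :
    rateBound S I ρ ≤ rateBound S I 0 + 1 / 2 := by
  have ht : 0 ≤ 1 - ρ ^ 2 := sub_nonneg.2 (pow_le_one₀ hρ.1 hρ.2)
  have first_log : logb 2 (1 + (1 - ρ ^ 2) * S / (1 + (1 - ρ ^ 2) * I)) ≤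
      logb 2 (1 + (1 - 0 ^ 2) * S / (1 + (1 - 0 ^ 2) * I)) := by
    refine logb_le_logb_of_le one_lt_two (by positivity) ?_
    gcongr 1 + ?_
    exact mul_div_one_add_mul_le_of_le hS hI ht (by gcongr; exact hρ.1)
  have second_log : logb 2 (1 + S + I + 2 * ρ * √(S * I)) ≤ 1 + logb 2 (1 + S + I) := by
    have hρ_nonneg := hρ.1
    calc logb 2 (1 + S + I + 2 * ρ * √(S * I)) ≤ logb 2 (2 * (1 + S + I)) :=
          logb_le_logb_of_le one_lt_two (by positivity)
            (by linarith [two_mul_mul_sqrt_mul_le_add hS hI hρ.2])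
      _ = 1 + logb 2 (1 + S + I) := by
          rw [logb_mul two_ne_zero (by positivity), logb_self_eq_one one_lt_two]
  simp only [rateBound, mul_zero, zero_mul, add_zero]
  linarith

lemma symmetricOuterBound_sub_rateBound_zero_mem_Icc (hS : 0 ≤ S) (hI : 0 ≤ I) :
    symmetricOuterBound S I - rateBound S I 0 ∈ Icc 0 (1 / 2) := by
  have upper : rateBound S I 0 + 1 / 2 ∈ upperBounds (rateBound S I '' Icc 0 1) :=
    forall_mem_image.2 fun _ hρ => rateBound_le_rateBound_zero_add hS hI hρ
  have zero_mem : rateBound S I 0 ∈ rateBound S I '' Icc 0 1 :=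
    mem_image_of_mem _ (left_mem_Icc.2 zero_le_one)
  exact ⟨sub_nonneg.2 (le_csSup ⟨_, upper⟩ zero_mem),
    sub_le_iff_le_add'.2 (csSup_le ⟨_, zero_mem⟩ upper)⟩

end FiniteSNR

lemma max_one_sub_max_zero_div_two {α : ℝ} (hα : 0 ≤ α) :
    max 1 α - max 0 α / 2 = max (α / 2) (1 - α / 2) := by
  rw [max_eq_right hα, ← max_sub_sub_right, sub_half, max_comm]

lemma tendsto_rateBound_zero_div_logb (α : ℝ) :
    Tendsto (fun s : ℝ => rateBound s (s ^ α) 0 / logb 2 s) atTop (𝓝 (max 1 α - max 0 α / 2)) := by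
  have total_power :=
    tendsto_logb_div_logb_of_isTheta_rpow one_lt_two (one_add_self_add_rpow_isTheta α)
  have interference := tendsto_logb_div_logb_of_isTheta_rpow one_lt_two (one_add_rpow_isTheta α)
  refine (total_power.sub (interference.div_const 2)).congr' ?_
  filter_upwards [eventually_ge_atTop 0] with s hs
  rw [rateBound_zero hs (rpow_nonneg hs α)]
  ring

theorem outer_bound_gdof_general (α : ℝ) :
    Tendsto (fun s : ℝ => symmetricOuterBound s (s ^ α) / logb 2 s) atTop
      (𝓝 (max 1 α - max 0 α / 2)) := by
  refine tendsto_div_of_sub_mem_Icc (a := 0) (b := 1 / 2) (tendsto_logb_atTop one_lt_two)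
    (tendsto_rateBound_zero_div_logb α) ?_
  filter_upwards [eventually_ge_atTop 0] with s hs
  exact symmetricOuterBound_sub_rateBound_zero_mem_Icc hs (rpow_nonneg hs α)

/-- Generalized degrees-of-freedom of the symmetric outer bound:
the "V curve" `max(α/2, 1 − α/2)`. -/
theorem outer_bound_gdof (α : ℝ) (hα : 0 ≤ α) :
    Tendsto (fun s : ℝ =>
        sSup ((fun ρ : ℝ =>
            (1 / 2) * (Real.logb 2 (1 + (1 - ρ ^ 2) * s / (1 + (1 - ρ ^ 2) * s ^ α)) +
              Real.logb 2 (1 + s + s ^ α + 2 * ρ * s ^ ((1 + α) / 2)))) ''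
          Set.Icc (0 : ℝ) 1) / Real.logb 2 s)
      atTop (nhds (max (α / 2) (1 - α / 2))) := by
  refine max_one_sub_max_zero_div_two hα ▸ (outer_bound_gdof_general α).congr' ?_
  filter_upwards [eventually_gt_atTop 0] with s hs
  unfold symmetricOuterBound rateBound
  simp only [sqrt_mul_rpow_self hs]
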